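/- arXiv:1706.10079 — 2 statements merged into one kernel-verified Lean document; each statement's English description precedes it below -/
import Mathlib

section
/- Let L be the splitting field of the polynomial X³ − 3X + 1 over ℚ (inside a fixed algebraic closure of ℚ). Then there is no element x ∈ L whose field norm N_{L/ℚ}(x) equals 2. -/
open Polynomial

/-!
If a prime `p` of `R` remains prime in `R[X] / (f)`, then the `p`-adic valuation of the norm of an
element of `K(a)`, where `f(a) = 0`, is a multiple of `deg f`, so `p` itself is not a norm. Indeed,
over the localization `A` of `R` at `p`, a nonzero element of `K(a)` is a constant `c` times `h(a)`,
where `h` is a polynomial over `A` of degree less than `deg f` that does not vanish modulo `p`.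
As `f` is irreducible modulo `p`, it is coprime to `h` modulo `p`; hence `h(a)` is a unit among the
`A`-integral elements, and its norm is a unit of `A`, while `c` has norm `c ^ deg f`.
By transitivity of the norm the same holds in every finite extension of `K` that contains `a`.

The cubic `X ^ 3 - 3 * X + 1` has no root modulo `2`, so it is irreducible there.
-/

open IsLocalRing (residue maximalIdeal ResidueField)

section IsLocalRing

variable {A : Type*} [CommRing A] [IsLocalRing A]

-- A maximal ideal of `B` containing `g(b)` lies over `maximalIdeal A`, so modulo it `b` would be a
-- common root of the coprime reductions of `f` and `g`.
theorem isUnit_aeval_of_isCoprime_map_residue {B : Type*} [CommRing B] [Algebra A B]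
    [Algebra.IsIntegral A B] {f g : A[X]} {b : B}
    (hfg : IsCoprime (f.map (residue A)) (g.map (residue A))) (hb : aeval b f = 0) :
    IsUnit (aeval b g) := by
  by_contra hg
  obtain ⟨M, hM, hgM⟩ := exists_max_ideal_of_mem_nonunits hg
  have hker : ∀ r ∈ maximalIdeal A, algebraMap A (B ⧸ M) r = 0 := by
    intro r hr
    rw [← IsLocalRing.eq_maximalIdeal (Ideal.IsMaximal.under A M)] at hr
    exact Ideal.Quotient.eq_zero_iff_mem.2 hr
  let ψ : ResidueField A →+* B ⧸ M := Ideal.Quotient.lift _ _ hker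
  have hψ (q : A[X]) : eval₂RingHom ψ (Ideal.Quotient.mk M b) (q.map (residue A)) =
      Ideal.Quotient.mk M (aeval b q) := by
    rw [coe_eval₂RingHom, eval₂_map, aeval_def, hom_eval₂]
    rfl
  have hcop := hfg.map (eval₂RingHom ψ (Ideal.Quotient.mk M b))
  rw [hψ, hψ, hb, Ideal.Quotient.eq_zero_iff_mem.2 hgM, map_zero] at hcop
  exact not_isCoprime_zero_zero hcop

theorem irreducible_map_residue_of_irreducible_map {R k : Type*} [CommRing R] [CommRing k]
    [IsDomain k] {P : Ideal R} [P.IsMaximal] [Algebra R A] [IsLocalization.AtPrime A P]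
    {φ : R →+* k} (hφ : P ≤ RingHom.ker φ) {f : R[X]} (hf : f.Monic)
    (hirr : Irreducible (f.map φ)) :
    Irreducible ((f.map (algebraMap R A)).map (residue A)) := by
  let e := IsLocalization.AtPrime.equivQuotMaximalIdeal P A
  let ψ : ResidueField A →+* k := (Ideal.Quotient.lift P φ hφ).comp e.symm.toRingHom
  have hψ : (ψ.comp (residue A)).comp (algebraMap R A) = φ := by
    ext r
    exact congrArg (Ideal.Quotient.lift P φ hφ) (e.symm_apply_apply (Ideal.Quotient.mk P r))
  refine ((hf.map _).map _).irreducible_of_irreducible_map ψ _ ?_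
  rwa [map_map, map_map, hψ]

end IsLocalRing

section IsIntegrallyClosed

variable {A K E : Type*} [CommRing A] [IsIntegrallyClosed A] [Field K] [Algebra A K]
  [IsFractionRing A K]

theorem unit_mul_pow_ne_algebraMap_of_irreducible {π : A} (hπ : Irreducible π) (u : Aˣ) (c : K)
    {n : ℕ} (hn : 1 < n) : algebraMap A K u * c ^ n ≠ algebraMap A K π := by
  intro h
  have hc : c ^ n = algebraMap A K (↑u⁻¹ * π) := by
    rw [map_mul, ← h, ← mul_assoc, ← map_mul, Units.inv_mul, map_one, one_mul]
  obtain ⟨d, rfl⟩ := IsIntegrallyClosed.exists_algebraMap_eq_of_isIntegral_pow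
    (one_pos.trans hn) (hc ▸ isIntegral_algebraMap)
  have hd : d ^ n = ↑u⁻¹ * π := IsFractionRing.injective A K (by rwa [map_pow])
  exact not_irreducible_pow hn.ne' (hd ▸ (irreducible_units_mul u⁻¹).2 hπ)

variable [IsDomain A] [Field E] [Algebra K E] [Algebra A E] [IsScalarTower A K E]

theorem exists_unit_algebraMap_eq_norm [FiniteDimensional K E] (u : (integralClosure A E)ˣ) :
    ∃ w : Aˣ, algebraMap A K w = Algebra.norm K ((u : integralClosure A E) : E) := by
  have := Module.IsTorsionFree.trans_faithfulSMul A K E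
  have := IsIntegralClosure.isFractionRing_of_finite_extension A K E (integralClosure A E)
  have := integralClosure.isIntegrallyClosedOfFiniteExtension K (R := A) (L := E)
  exact ⟨Units.map (Algebra.intNorm A (integralClosure A E)) u,
    Algebra.algebraMap_intNorm (u : integralClosure A E)⟩

theorem minpoly_eq_map_of_irreducible_map {k : Type*} [CommRing k] [IsDomain k] {φ : A →+* k}
    {f : A[X]} (hf : f.Monic) (hirr : Irreducible (f.map φ)) {a : E} (ha : aeval a f = 0) :
    minpoly K a = f.map (algebraMap A K) := by
  have hirrK : Irreducible (f.map (algebraMap A K)) :=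
    hf.irreducible_iff_irreducible_map_fraction_map.1 (hf.irreducible_of_irreducible_map φ f hirr)
  exact (minpoly.eq_of_irreducible_of_monic hirrK (by rwa [aeval_map_algebraMap]) (hf.map _)).symm

theorem dim_eq_natDegree_of_irreducible_map {k : Type*} [CommRing k] [IsDomain k] {φ : A →+* k}
    (pb : PowerBasis K E) {f : A[X]} (hf : f.Monic) (hirr : Irreducible (f.map φ))
    (hgen : aeval pb.gen f = 0) : pb.dim = f.natDegree := by
  rw [← pb.natDegree_minpoly, minpoly_eq_map_of_irreducible_map hf hirr hgen, hf.natDegree_map]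

end IsIntegrallyClosed

section ValuationRing

variable {A K : Type*} [CommRing A] [IsDomain A] [ValuationRing A] [Field K] [Algebra A K]
  [IsFractionRing A K]

-- Divide `g` by a coefficient of maximal valuation.
theorem exists_eq_C_mul_map_of_ne_zero {g : K[X]} (hg : g ≠ 0) :
    ∃ (c : K) (h : A[X]), h.map (residue A) ≠ 0 ∧ g = C c * h.map (algebraMap A K) := by
  let v := ValuationRing.valuation A K
  obtain ⟨i, hi, hmax⟩ := g.support.exists_max_image (v <| g.coeff ·) (support_nonempty.2 hg)
  have hc : g.coeff i ≠ 0 := mem_support_iff.1 hi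
  have hle (j : ℕ) : v (g.coeff j) ≤ v (g.coeff i) := by
    by_cases hj : g.coeff j = 0
    · simp [hj]
    · exact hmax j (mem_support_iff.2 hj)
  have hlifts : C (g.coeff i)⁻¹ * g ∈ lifts (algebraMap A K) := by
    refine (lifts_iff_coeff_lifts _).2 fun j ↦ (ValuationRing.mem_integer_iff A K _).1 ?_
    rw [coeff_C_mul, Valuation.mem_integer_iff, map_mul, map_inv₀,
      inv_mul_le_one₀ (v.pos_iff.2 hc)]
    exact hle j
  obtain ⟨h, hh⟩ := (mem_lifts _).1 hlifts
  have hone : h.coeff i = 1 := by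
    apply IsFractionRing.injective A K
    rw [← coeff_map, hh, coeff_C_mul, inv_mul_cancel₀ hc, map_one]
  refine ⟨g.coeff i, h, fun h0 ↦ ?_, ?_⟩
  · simpa [hone] using congrArg (coeff · i) h0
  · rw [hh, ← mul_assoc, ← C_mul, mul_inv_cancel₀ hc, C_1, one_mul]

section PowerBasis

variable {E : Type*} [Field E] [Algebra K E] [Algebra A E] [IsScalarTower A K E] {f : A[X]}

theorem exists_eq_smul_unit_of_powerBasis (pb : PowerBasis K E) (hf : f.Monic)
    (hirr : Irreducible (f.map (residue A))) (hgen : aeval pb.gen f = 0) (x : E) :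
    ∃ (c : K) (u : (integralClosure A E)ˣ), x = c • ((u : integralClosure A E) : E) := by
  rcases eq_or_ne x 0 with rfl | hx
  · exact ⟨0, 1, (zero_smul K _).symm⟩
  obtain ⟨g, hgdeg, rfl⟩ := pb.exists_eq_aeval x
  have hg : g ≠ 0 := by rintro rfl; exact hx (map_zero _)
  obtain ⟨c, h, hh, rfl⟩ := exists_eq_C_mul_map_of_ne_zero (A := A) hg
  have hc : c ≠ 0 := by rintro rfl; simp at hg
  have hdeg : (h.map (residue A)).natDegree < (f.map (residue A)).natDegree := by
    rw [natDegree_C_mul hc, natDegree_map_eq_of_injective (IsFractionRing.injective A K),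
      dim_eq_natDegree_of_irreducible_map pb hf hirr hgen] at hgdeg
    rw [hf.natDegree_map]
    exact natDegree_map_le.trans_lt hgdeg
  have hcop : IsCoprime (f.map (residue A)) (h.map (residue A)) :=
    hirr.coprime_iff_not_dvd.2 (not_dvd_of_natDegree_lt hh hdeg)
  let b : integralClosure A E := ⟨pb.gen, f, hf, hgen⟩
  have hb : aeval b f = 0 := Subtype.ext ((aeval_subalgebra_coe f _ b).trans hgen)
  obtain ⟨u, hu⟩ := isUnit_aeval_of_isCoprime_map_residue hcop hb
  refine ⟨c, u, ?_⟩
  rw [hu, aeval_subalgebra_coe, aeval_mul, aeval_C, aeval_map_algebraMap, Algebra.smul_def]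

theorem exists_norm_eq_unit_mul_pow_of_powerBasis (pb : PowerBasis K E) (hf : f.Monic)
    (hirr : Irreducible (f.map (residue A))) (hgen : aeval pb.gen f = 0) (x : E) :
    ∃ (u : Aˣ) (c : K), Algebra.norm K x = algebraMap A K u * c ^ f.natDegree := by
  have := pb.finite
  obtain ⟨c, v, rfl⟩ := exists_eq_smul_unit_of_powerBasis pb hf hirr hgen x
  obtain ⟨u, hu⟩ := exists_unit_algebraMap_eq_norm (K := K) v
  refine ⟨u, c, ?_⟩
  rw [Algebra.smul_def, map_mul, Algebra.norm_algebraMap, pb.finrank,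
    dim_eq_natDegree_of_irreducible_map pb hf hirr hgen, hu, mul_comm]

end PowerBasis

variable {L : Type*} [Field L] [Algebra K L] [Algebra A L] [IsScalarTower A K L] {f : A[X]} {a : L}

open scoped IntermediateField in
theorem exists_norm_eq_unit_mul_pow_natDegree (hf : f.Monic)
    (hirr : Irreducible (f.map (residue A))) (ha : aeval a f = 0) (x : L) :
    ∃ (u : Aˣ) (c : K), Algebra.norm K x = algebraMap A K u * c ^ f.natDegree := by
  have haK : IsIntegral K a := IsIntegral.tower_top (R := A) ⟨f, hf, ha⟩
  have : IsScalarTower A K⟮a⟯ L := .to₁₃₄ A K K⟮a⟯ L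
  have hgen : aeval (IntermediateField.AdjoinSimple.gen K a) f = 0 := by
    apply (algebraMap K⟮a⟯ L).injective
    rw [← aeval_algebraMap_apply, IntermediateField.AdjoinSimple.algebraMap_gen, ha, map_zero]
  rw [← Algebra.norm_norm (S := K⟮a⟯)]
  exact exists_norm_eq_unit_mul_pow_of_powerBasis (IntermediateField.adjoin.powerBasis haK) hf hirr
    hgen _

theorem norm_ne_algebraMap_of_irreducible (hf : f.Monic) (hirr : Irreducible (f.map (residue A)))
    (hdeg : 1 < f.natDegree) (ha : aeval a f = 0) {π : A} (hπ : Irreducible π) (x : L) :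
    Algebra.norm K x ≠ algebraMap A K π := by
  obtain ⟨u, c, hx⟩ := exists_norm_eq_unit_mul_pow_natDegree (K := K) hf hirr ha x
  exact hx ▸ unit_mul_pow_ne_algebraMap_of_irreducible hπ u c hdeg

end ValuationRing

theorem prime_algebraMap_of_isLocalization_atPrime_span {R A : Type*} [CommRing R] [IsDomain R]
    [CommRing A] [Algebra R A] {p : R} (hp : Prime p) [(Ideal.span {p}).IsPrime]
    [IsLocalization.AtPrime A (Ideal.span {p})] : Prime (algebraMap R A p) := by
  have := IsLocalization.AtPrime.isLocalRing A (Ideal.span {p})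
  have hinj := IsLocalization.injective A (Ideal.span {p}).primeCompl_le_nonZeroDivisors
  rw [← Ideal.span_singleton_prime ((map_ne_zero_iff _ hinj).2 hp.ne_zero), ← Set.image_singleton,
    ← Ideal.map_span, IsLocalization.AtPrime.map_eq_maximalIdeal (Ideal.span {p}) A]
  infer_instance

theorem stmt13_general {R K L k : Type*} [CommRing R] [IsDedekindDomain R] [Field K] [Algebra R K]
    [IsFractionRing R K] [Field L] [Algebra K L] [FiniteDimensional K L] [Algebra R L]
    [IsScalarTower R K L] [CommRing k] [IsDomain k] {p : R} (hp : Prime p) {φ : R →+* k}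
    (hφ : φ p = 0) {f : R[X]} (hf : f.Monic) (hirr : Irreducible (f.map φ))
    (hdeg : 1 < f.natDegree) {a : L} (ha : aeval a f = 0) (x : L) :
    Algebra.norm K x ≠ algebraMap R K p := by
  let P := Ideal.span {p}
  have hP : P ≠ ⊥ := Ideal.span_singleton_eq_bot.not.2 hp.ne_zero
  have : P.IsPrime := (Ideal.span_singleton_prime hp.ne_zero).2 hp
  have : P.IsMaximal := this.isMaximal hP
  have hPφ : P ≤ RingHom.ker φ := (Ideal.span_singleton_le_iff_mem _).2 hφ
  let A := Localization.subalgebra.ofField K P.primeCompl P.primeCompl_le_nonZeroDivisors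
  have : IsLocalization.AtPrime A P := Localization.subalgebra.isLocalization_ofField _ _ _
  have : IsDiscreteValuationRing A :=
    IsLocalization.AtPrime.isDiscreteValuationRing_of_dedekind_domain R hP A
  have hpA : Prime (algebraMap R A p) := prime_algebraMap_of_isLocalization_atPrime_span hp
  rw [IsScalarTower.algebraMap_apply R A K]
  exact norm_ne_algebraMap_of_irreducible (hf.map _)
    (irreducible_map_residue_of_irreducible_map hPφ hf hirr) (by rwa [hf.natDegree_map])
    (by rwa [aeval_map_algebraMap]) hpA.irreducible x

theorem isMonicOfDegree_X_pow_three_sub_three_mul_X_add_one (R : Type*) [CommRing R]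
    [Nontrivial R] : IsMonicOfDegree (X ^ 3 - 3 * X + 1 : R[X]) 3 := by
  rw [← map_ofNat C 3, ← C_1]
  exact ⟨by compute_degree!, by monicity!⟩

theorem irreducible_map_zmod_two_X_pow_three_sub_three_mul_X_add_one :
    Irreducible ((X ^ 3 - 3 * X + 1 : ℤ[X]).map (Int.castRingHom (ZMod 2))) := by
  have hmonic := isMonicOfDegree_X_pow_three_sub_three_mul_X_add_one ℤ
  have hroot : ∀ a : ZMod 2, a ^ 3 - 3 * a + 1 ≠ 0 := by decide
  refine irreducible_of_degree_le_three_of_not_isRoot ?_ fun a ha ↦ hroot a (by simpa using ha)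
  rw [hmonic.monic.natDegree_map, hmonic.natDegree_eq]
  decide

theorem exists_splittingField_aeval_X_pow_three_sub_three_mul_X_add_one_eq_zero :
    ∃ a : (X ^ 3 - 3 * X + 1 : ℚ[X]).SplittingField, aeval a (X ^ 3 - 3 * X + 1 : ℤ[X]) = 0 := by
  have hf := isMonicOfDegree_X_pow_three_sub_three_mul_X_add_one ℚ
  have hdeg : (X ^ 3 - 3 * X + 1 : ℚ[X]).degree ≠ 0 :=
    degree_ne_of_natDegree_ne (hf.natDegree_eq.trans_ne three_ne_zero)
  obtain ⟨a, ha⟩ := (SplittingField.splits (X ^ 3 - 3 * X + 1 : ℚ[X])).exists_eval_eq_zero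
    (by rwa [degree_map])
  exact ⟨a, by simpa [map_ofNat (aeval a)] using ha⟩

/-- no element of the splitting field `L` of `X³ - 3X + 1` over `ℚ`
has field norm `N_{L/ℚ}` equal to `2`. -/
theorem stmt13 :
    ∀ x : (X ^ 3 - 3 * X + 1 : ℚ[X]).SplittingField,
      Algebra.norm ℚ x ≠ 2 := by
  intro x
  obtain ⟨a, ha⟩ := exists_splittingField_aeval_X_pow_three_sub_three_mul_X_add_one_eq_zero
  have hf := isMonicOfDegree_X_pow_three_sub_three_mul_X_add_one ℤ
  simpa using stmt13_general (K := ℚ) Int.prime_two (φ := Int.castRingHom (ZMod 2)) rfl hf.monic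
    irreducible_map_zmod_two_X_pow_three_sub_three_mul_X_add_one (by simp [hf.natDegree_eq]) ha x
end

section
/- Let L be the splitting field of the polynomial X³ − 3X + 1 over ℚ (inside a fixed algebraic closure of ℚ). Then [L : ℚ] = 3, and the ideal generated by 2 in the ring of integers 𝒪_L of L is a prime ideal (that is, 2 is inert in L). -/
open Polynomial

/-!
Modulo `2` the cubic `f = X³ - 3X + 1` takes only the value `1`, so it is irreducible over `𝔽₂`, and
this single fact gives both claims. It makes `f` irreducible over `ℚ`; the roots of `f` are
`2 cos (2πk/9)`, `k = 1, 2, 4`, so doubling the angle expresses all of them in terms of one, and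
`L = ℚ[X]/(f)` has degree `3`. Sending `X` to a root of `f` in `𝒪_L` then defines a homomorphism
from the field `𝔽₂[X]/(f)` to `𝒪_L/2𝒪_L`. Both have dimension `3` over `𝔽₂`, so it is an
isomorphism and `𝒪_L/2𝒪_L` is a field.
-/

section InertPrimes

theorem isField_of_irreducible_of_natDegree_eq_finrank {k A : Type*} [Field k] [CommRing A]
    [Algebra k A] {f : k[X]} (hf : Irreducible f) (hdeg : f.natDegree = Module.finrank k A)
    {a : A} (ha : aeval a f = 0) : IsField A := by
  have : Fact (Irreducible f) := ⟨hf⟩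
  have hpos : 0 < Module.finrank k A := hdeg ▸ hf.natDegree_pos
  have : Module.Finite k A := Module.finite_of_finrank_pos hpos
  have : Nontrivial A := Module.nontrivial_of_finrank_pos hpos
  have : Module.Finite k (AdjoinRoot f) := (AdjoinRoot.powerBasis hf.ne_zero).finite
  let φ : AdjoinRoot f →ₐ[k] A := AdjoinRoot.liftAlgHom f (Algebra.ofId k A) a ha
  have hinj : Function.Injective φ := φ.toRingHom.injective
  have hfinrank : Module.finrank k (AdjoinRoot f) = Module.finrank k A :=
    finrank_quotient_span_eq_natDegree.trans hdeg
  have hsurj : Function.Surjective φ :=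
    (LinearMap.injective_iff_surjective_of_finrank_eq_finrank (f := φ.toLinearMap) hfinrank).mp hinj
  exact (AlgEquiv.ofBijective φ ⟨hinj, hsurj⟩).symm.toMulEquiv.isField (Field.toIsField _)

theorem finrank_quotient_map_eq_finrank {R S : Type*} [CommRing R] [CommRing S] [Algebra R S]
    [Module.Free R S] (I : Ideal R) [Nontrivial (R ⧸ I)] :
    Module.finrank (R ⧸ I) (S ⧸ I.map (algebraMap R S)) = Module.finrank R S := by
  have : Nontrivial R := (Ideal.Quotient.mk I).domain_nontrivial
  rw [(Algebra.TensorProduct.quotIdealMapEquivQuotTensor S I).toLinearEquiv.finrank_eq,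
    Module.finrank_baseChange]

theorem isMaximal_map_of_irreducible_map_quotient {R S : Type*} [CommRing R] [CommRing S]
    [Algebra R S] [Module.Free R S] {𝔭 : Ideal R} [𝔭.IsMaximal] {f : R[X]}
    (hf : Irreducible (f.map (Ideal.Quotient.mk 𝔭)))
    (hdeg : (f.map (Ideal.Quotient.mk 𝔭)).natDegree = Module.finrank R S)
    {a : S} (ha : aeval a f = 0) : (𝔭.map (algebraMap R S)).IsMaximal := by
  let := Ideal.Quotient.field 𝔭
  refine Ideal.Quotient.maximal_of_isField _ ?_
  refine isField_of_irreducible_of_natDegree_eq_finrank hf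
    (hdeg.trans (finrank_quotient_map_eq_finrank 𝔭).symm)
    (a := Ideal.Quotient.mk (𝔭.map (algebraMap R S)) a) ?_
  rw [← Ideal.Quotient.algebraMap_eq 𝔭, aeval_map_algebraMap, ← Ideal.Quotient.algebraMap_eq,
    aeval_algebraMap_apply, ha, map_zero]

theorem irreducible_map_quotient_span_natCast_iff {p : ℕ} {f : ℤ[X]} :
    Irreducible (f.map (Ideal.Quotient.mk (Ideal.span {(p : ℤ)}))) ↔
      Irreducible (f.map (Int.castRingHom (ZMod p))) := by
  rw [← Int.quotientSpanNatEquivZMod_comp_Quotient_mk, ← map_map]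
  exact (MulEquiv.irreducible_iff (mapEquiv (Int.quotientSpanNatEquivZMod p))).symm

open NumberField in
theorem isMaximal_span_natCast_of_irreducible_map_zmod {K : Type*} [Field K] [NumberField K]
    {p : ℕ} [Fact p.Prime] {f : ℤ[X]} (hmonic : f.Monic)
    (hf : Irreducible (f.map (Int.castRingHom (ZMod p))))
    (hdeg : f.natDegree = Module.finrank ℚ K) {x : K} (hx : aeval x f = 0) :
    (Ideal.span {(p : 𝓞 K)}).IsMaximal := by
  let a : 𝓞 K := ⟨x, f, hmonic, hx⟩
  have ha : aeval a f = 0 := by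
    apply FaithfulSMul.algebraMap_injective (𝓞 K) K
    rwa [← aeval_algebraMap_apply, map_zero]
  have hmax := isMaximal_map_of_irreducible_map_quotient
    (irreducible_map_quotient_span_natCast_iff.mpr hf)
    (by rw [hmonic.natDegree_map, hdeg, RingOfIntegers.rank]) ha
  simpa only [Ideal.map_span, Set.image_singleton, map_natCast] using hmax

end InertPrimes

section SplittingFields

variable {K : Type*} [Field K] {f : K[X]}

theorem isSplittingField_adjoinRoot [Fact (Irreducible f)]
    (h : (f.map (AdjoinRoot.of f)).Splits) : f.IsSplittingField K (AdjoinRoot f) where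
  splits' := h
  adjoin_rootSet' := by
    have hroot : AdjoinRoot.root f ∈ f.rootSet (AdjoinRoot f) :=
      mem_rootSet.mpr ⟨(Fact.out : Irreducible f).ne_zero, AdjoinRoot.eval₂_root f⟩
    rw [eq_top_iff, ← AdjoinRoot.adjoinRoot_eq_top]
    exact Algebra.adjoin_mono (Set.singleton_subset_iff.mpr hroot)

theorem finrank_splittingField_eq_natDegree (hf : Irreducible f)
    (h : (f.map (AdjoinRoot.of f)).Splits) :
    Module.finrank K f.SplittingField = f.natDegree := by
  have : Fact (Irreducible f) := ⟨hf⟩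
  have := isSplittingField_adjoinRoot h
  exact (IsSplittingField.algEquiv (AdjoinRoot f) f).toLinearEquiv.finrank_eq.symm.trans
    finrank_quotient_span_eq_natDegree

end SplittingFields

section Cubic

theorem natDegree_X_pow_three_sub_three_mul_X_add_one {R : Type*} [CommRing R] [Nontrivial R] :
    (X ^ 3 - 3 * X + 1 : R[X]).natDegree = 3 := by
  rw [← C_ofNat]
  compute_degree!

theorem monic_X_pow_three_sub_three_mul_X_add_one {R : Type*} [CommRing R] :
    (X ^ 3 - 3 * X + 1 : R[X]).Monic := by
  rw [← C_ofNat]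
  monicity!

theorem map_X_pow_three_sub_three_mul_X_add_one {R S : Type*} [CommRing R] [CommRing S]
    (φ : R →+* S) : (X ^ 3 - 3 * X + 1 : R[X]).map φ = X ^ 3 - 3 * X + 1 := by
  simp

theorem splits_X_pow_three_sub_three_mul_X_add_one {R : Type*} [CommRing R] {a : R}
    (ha : (X ^ 3 - 3 * X + 1 : R[X]).IsRoot a) : (X ^ 3 - 3 * X + 1 : R[X]).Splits := by
  have hC : (C a ^ 3 - 3 * C a + 1 : R[X]) = 0 := by
    simpa [C_ofNat] using congrArg (C : R → R[X]) ha
  -- For `a = 2 cos θ` the second root is `2 cos 2θ`; the three roots sum to `0`.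
  have hprod : (X ^ 3 - 3 * X + 1 : R[X]) =
      (X - C a) * (X - C (a ^ 2 - 2)) * (X - C (2 - a - a ^ 2)) := by
    simp only [map_sub, map_pow, C_ofNat]
    linear_combination (X * (C a + 1) + (-(C a) ^ 2 - C a + 1)) * hC
  rw [hprod]
  exact ((Splits.X_sub_C _).mul (Splits.X_sub_C _)).mul (Splits.X_sub_C _)

theorem irreducible_X_pow_three_sub_three_mul_X_add_one_zmod_two :
    Irreducible (X ^ 3 - 3 * X + 1 : (ZMod 2)[X]) := by
  refine irreducible_of_degree_le_three_of_not_isRoot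
    (by simp [natDegree_X_pow_three_sub_three_mul_X_add_one]) fun x hx ↦ ?_
  have hroot : x ^ 3 - 3 * x + 1 = 0 := by simpa using hx
  have hnoroot : ∀ y : ZMod 2, y ^ 3 - 3 * y + 1 ≠ 0 := by decide
  exact hnoroot x hroot

theorem irreducible_X_pow_three_sub_three_mul_X_add_one_rat :
    Irreducible (X ^ 3 - 3 * X + 1 : ℚ[X]) := by
  have hmonic : (X ^ 3 - 3 * X + 1 : ℤ[X]).Monic := monic_X_pow_three_sub_three_mul_X_add_one
  have hint : Irreducible (X ^ 3 - 3 * X + 1 : ℤ[X]) := by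
    refine hmonic.irreducible_of_irreducible_map (Int.castRingHom (ZMod 2)) _ ?_
    rw [map_X_pow_three_sub_three_mul_X_add_one]
    exact irreducible_X_pow_three_sub_three_mul_X_add_one_zmod_two
  rw [← map_X_pow_three_sub_three_mul_X_add_one (algebraMap ℤ ℚ)]
  exact hmonic.irreducible_iff_irreducible_map_fraction_map.mp hint

theorem finrank_splittingField_X_pow_three_sub_three_mul_X_add_one :
    Module.finrank ℚ (X ^ 3 - 3 * X + 1 : ℚ[X]).SplittingField = 3 := by
  have hroot := AdjoinRoot.isRoot_root (X ^ 3 - 3 * X + 1 : ℚ[X])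
  rw [finrank_splittingField_eq_natDegree irreducible_X_pow_three_sub_three_mul_X_add_one_rat,
    natDegree_X_pow_three_sub_three_mul_X_add_one]
  rw [map_X_pow_three_sub_three_mul_X_add_one] at hroot ⊢
  exact splits_X_pow_three_sub_three_mul_X_add_one hroot

end Cubic

/-- the splitting field `L` of `X³ - 3X + 1` over `ℚ` has degree 3,
and the ideal generated by `2` in the ring of integers of `L` (the integral
closure of `ℤ` in `L`) is prime, i.e. `2` is inert in `L`. -/
theorem stmt14 :
    Module.finrank ℚ (X ^ 3 - 3 * X + 1 : ℚ[X]).SplittingField = 3 ∧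
      (Ideal.span
        {(2 : integralClosure ℤ (X ^ 3 - 3 * X + 1 : ℚ[X]).SplittingField)}).IsPrime := by
  have hfinrank := finrank_splittingField_X_pow_three_sub_three_mul_X_add_one
  refine ⟨hfinrank, ?_⟩
  have hirr := irreducible_X_pow_three_sub_three_mul_X_add_one_rat
  set g : ℚ[X] := X ^ 3 - 3 * X + 1 with hg
  have : NumberField g.SplittingField := .of_module_finite ℚ _
  obtain ⟨x, hx⟩ := (SplittingField.splits g).exists_eval_eq_zero
    (by rw [degree_map]; exact hirr.degree_pos.ne')
  have hmax := isMaximal_span_natCast_of_irreducible_map_zmod (p := 2)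
    (f := X ^ 3 - 3 * X + 1) monic_X_pow_three_sub_three_mul_X_add_one
    (by simpa using irreducible_X_pow_three_sub_three_mul_X_add_one_zmod_two)
    (by rw [natDegree_X_pow_three_sub_three_mul_X_add_one, hfinrank])
    (by simpa [hg, map_ofNat] using hx)
  exact hmax.isPrime
end
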